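/- arXiv:1812.09913 — 4 statements merged into one kernel-verified Lean document; each statement's English description precedes it below -/
import Mathlib

section
/- There exists an absolute constant C > 0 such that for all reals k ≥ 2 and ℓ ≥ 2, every integer n ≥ 1, and all disjoint finite sets A and B with |A| = |B| = n, there exists a bipartite graph H with vertex set A ∪ B and all edges between A and B, having at most C · n · (k · log ℓ + ℓ · log k) edges, such that for every subset B' ⊆ B with |B'| ≥ n/ℓ, the neighbourhood of B' in H satisfies |N_H(B')| ≥ (1 − 1/k) · n. -/
/-!
Only edges between `A` and `B` matter, so it suffices to find a small `E ⊆ A × B` meeting every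
rectangle `S × T` with `|S| ≥ |A| / k` and `|T| ≥ |B| / ℓ`: the vertices of `A` outside `N(B')` span
no edge with `B'`, hence there are fewer than `|A| / k` of them. Pick the pairs of `E` greedily.
Among rectangles of density at least `t`, some pair lies in a proportion `t` of them, so after `m`
picks a proportion of at most `exp (-m t)` is left. With sides of sizes `a ≈ |A| / k` and
`b ≈ |B| / ℓ` there are `exp (O(a log k + b log ℓ))` rectangles, of density `t = a b / (|A| |B|)`.
-/

open Finset Real

section HittingSet

variable {ι β : Type*} [DecidableEq β] {Ω : Finset β} {I : Finset ι} {s : ι → Finset β} {t : ℝ}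

theorem exists_mem_card_filter_notMem_le (hΩ : Ω.Nonempty)
    (hs : ∀ i ∈ I, t * #Ω ≤ #(Ω ∩ s i)) :
    ∃ x ∈ Ω, (#{i ∈ I | x ∉ s i} : ℝ) ≤ (1 - t) * #I := by
  apply exists_le_of_sum_le hΩ
  have double_count : ∑ x ∈ Ω, #{i ∈ I | x ∉ s i} = ∑ i ∈ I, #(Ω \ s i) := by
    simp only [sdiff_eq_filter]
    exact sum_card_bipartiteAbove_eq_sum_card_bipartiteBelow fun x i ↦ x ∉ s i
  have card_sdiff_le : ∀ i ∈ I, (#(Ω \ s i) : ℝ) ≤ (1 - t) * #Ω := by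
    intro i hi
    have hcard : (#(Ω \ s i) : ℝ) + #(Ω ∩ s i) = #Ω := mod_cast card_sdiff_add_card_inter Ω (s i)
    linarith [hs i hi]
  calc ∑ x ∈ Ω, (#{i ∈ I | x ∉ s i} : ℝ) = ∑ i ∈ I, (#(Ω \ s i) : ℝ) := mod_cast double_count
    _ ≤ ∑ _i ∈ I, (1 - t) * #Ω := sum_le_sum card_sdiff_le
    _ = ∑ _x ∈ Ω, (1 - t) * #I := by simp only [sum_const, nsmul_eq_mul]; ring

theorem exists_hitting_set {m : ℕ} (hΩ : Ω.Nonempty) (hs : ∀ i ∈ I, t * #Ω ≤ #(Ω ∩ s i))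
    (hI : #I < exp (m * t)) :
    ∃ E ⊆ Ω, #E ≤ m ∧ ∀ i ∈ I, ∃ x ∈ E, x ∈ s i := by
  induction m generalizing I with
  | zero =>
    have hI_empty : I = ∅ := by simpa using hI
    exact ⟨∅, by simp [hI_empty]⟩
  | succ m ih =>
    obtain ⟨x, hx, hx_card⟩ := exists_mem_card_filter_notMem_le hΩ hs
    have missed_lt : (#{i ∈ I | x ∉ s i} : ℝ) < exp (m * t) :=
      calc (#{i ∈ I | x ∉ s i} : ℝ) ≤ (1 - t) * #I := hx_card
        _ ≤ exp (-t) * #I := by gcongr; exact one_sub_le_exp_neg t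
        _ < exp (-t) * exp ((m + 1 : ℕ) * t) := by gcongr
        _ = exp (m * t) := by rw [← exp_add]; push_cast; ring_nf
    obtain ⟨E, hEΩ, hEm, hE⟩ := ih (fun i hi ↦ hs i (mem_of_mem_filter i hi)) missed_lt
    refine ⟨insert x E, insert_subset hx hEΩ, (card_insert_le x E).trans (by lia), fun i hi ↦ ?_⟩
    by_cases hxi : x ∈ s i
    · exact ⟨x, mem_insert_self x E, hxi⟩
    · obtain ⟨y, hy, hyi⟩ := hE i (mem_filter.2 ⟨hi, hxi⟩)
      exact ⟨y, mem_insert_of_mem hy, hyi⟩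

end HittingSet

section Estimates

theorem one_le_mul_log {x y : ℝ} (hx : 2 ≤ x) (hy : 2 ≤ y) : 1 ≤ x * log y :=
  calc (1 : ℝ) ≤ 2 * log 2 := by linarith [log_two_gt_d9]
    _ ≤ x * log y := by gcongr

theorem choose_le_exp_mul_one_add_log {n r : ℕ} {k : ℝ} (hk : 0 < k) (h : n ≤ r * k) :
    (n.choose r : ℝ) ≤ exp (r * (1 + log k)) :=
  calc (n.choose r : ℝ) ≤ (n : ℝ) ^ r / r.factorial := Nat.choose_le_pow_div r n
    _ ≤ (r * k) ^ r / r.factorial := by gcongr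
    _ = (r : ℝ) ^ r / r.factorial * k ^ r := by ring
    _ ≤ exp r * k ^ r := by gcongr; exact pow_div_factorial_le_exp (r : ℝ) r.cast_nonneg r
    _ = exp (r * (1 + log k)) := by
      rw [mul_add, mul_one, exp_add, exp_nat_mul (log k), exp_log hk]

theorem choose_le_exp_mul_log {n r : ℕ} {k : ℝ} (hk : 2 ≤ k) (h : n ≤ r * k) :
    (n.choose r : ℝ) ≤ exp (r * (3 * log k)) := by
  refine (choose_le_exp_mul_one_add_log (by linarith) h).trans ?_
  gcongr
  linarith [one_le_mul_log le_rfl hk]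

/-- With `u = 3 log k` and `v = 3 log ℓ`, the left side bounds the logarithm of the number of
`a × b` rectangles in a `p × q` grid, and `a b / (p q)` is their density. -/
theorem add_lt_mul_density {p q a b k ℓ u v m : ℝ} (hp : 0 < p) (hq : 0 < q)
    (hk : 0 < k) (hℓ : 0 < ℓ) (hu : 0 ≤ u) (hv : 0 ≤ v) (ha : p ≤ a * k) (hb : q ≤ b * ℓ)
    (hm : k * q * v + ℓ * p * u < m) :
    a * u + b * v < m * (a * b / (p * q)) := by
  have ha_pos : 0 < a := pos_of_mul_pos_left (hp.trans_le ha) hk.le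
  have hb_pos : 0 < b := pos_of_mul_pos_left (hq.trans_le hb) hℓ.le
  rw [← mul_div_assoc, lt_div_iff₀ (by positivity)]
  calc (a * u + b * v) * (p * q) = p * (b * q * v) + q * (a * p * u) := by ring
    _ ≤ a * k * (b * q * v) + b * ℓ * (a * p * u) := by gcongr
    _ = (k * q * v + ℓ * p * u) * (a * b) := by ring
    _ < m * (a * b) := by gcongr

end Estimates

section Rectangles

variable {α β : Type*} {A : Finset α} {B : Finset β} {k ℓ : ℝ}

theorem exists_subset_product_forall_card_eq {a b m : ℕ} (hA : A.Nonempty) (hB : B.Nonempty)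
    (hk : 2 ≤ k) (hℓ : 2 ≤ ℓ) (ha : #A ≤ a * k) (hb : #B ≤ b * ℓ)
    (hm : 3 * (k * #B * log ℓ + ℓ * #A * log k) < m) :
    ∃ E ⊆ A ×ˢ B, #E ≤ m ∧
      ∀ S ⊆ A, #S = a → ∀ T ⊆ B, #T = b → ∃ x ∈ S, ∃ y ∈ T, (x, y) ∈ E := by
  classical
  have hA_pos : (0 : ℝ) < #A := mod_cast hA.card_pos
  have hB_pos : (0 : ℝ) < #B := mod_cast hB.card_pos
  let I := A.powersetCard a ×ˢ B.powersetCard b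
  have mem_I (R : Finset α × Finset β) :
      R ∈ I ↔ (R.1 ⊆ A ∧ #R.1 = a) ∧ R.2 ⊆ B ∧ #R.2 = b := by
    simp only [I, mem_product, mem_powersetCard]
  have density : ∀ R ∈ I, (a * b / (#A * #B) : ℝ) * #(A ×ˢ B) ≤ #(A ×ˢ B ∩ R.1 ×ˢ R.2) := by
    intro R hR
    obtain ⟨⟨hSA, hSa⟩, hTB, hTb⟩ := (mem_I R).1 hR
    rw [inter_eq_right.2 (product_subset_product hSA hTB), card_product, card_product, hSa, hTb]
    push_cast
    rw [div_mul_cancel₀ _ (by positivity)]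
  have card_I_lt : #I < exp (m * (a * b / (#A * #B) : ℝ)) :=
    calc (#I : ℝ) = (#A).choose a * (#B).choose b := by simp [I]
      _ ≤ exp (a * (3 * log k)) * exp (b * (3 * log ℓ)) := by
        gcongr
        exacts [choose_le_exp_mul_log hk ha, choose_le_exp_mul_log hℓ hb]
      _ = exp (a * (3 * log k) + b * (3 * log ℓ)) := (exp_add _ _).symm
      _ < exp (m * (a * b / (#A * #B) : ℝ)) :=
        exp_lt_exp.2 <| add_lt_mul_density hA_pos hB_pos (by linarith) (by linarith)
          (mul_nonneg zero_le_three (log_nonneg (by linarith)))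
          (mul_nonneg zero_le_three (log_nonneg (by linarith))) ha hb (by linarith)
  obtain ⟨E, hEAB, hEm, hE⟩ := exists_hitting_set (hA.product hB) density card_I_lt
  refine ⟨E, hEAB, hEm, fun S hSA hSa T hTB hTb ↦ ?_⟩
  obtain ⟨⟨x, y⟩, hxyE, hxy⟩ := hE (S, T) ((mem_I _).2 ⟨⟨hSA, hSa⟩, hTB, hTb⟩)
  exact ⟨x, (mem_product.1 hxy).1, y, (mem_product.1 hxy).2, hxyE⟩

theorem exists_subset_product_forall_div_le_card (hA : A.Nonempty) (hB : B.Nonempty)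
    (hk : 2 ≤ k) (hℓ : 2 ≤ ℓ) :
    ∃ E ⊆ A ×ˢ B, (#E : ℝ) ≤ 4 * (k * #B * log ℓ + ℓ * #A * log k) ∧
      ∀ S ⊆ A, #A / k ≤ #S → ∀ T ⊆ B, #B / ℓ ≤ #T → ∃ x ∈ S, ∃ y ∈ T, (x, y) ∈ E := by
  set X := k * #B * log ℓ + ℓ * #A * log k
  have one_le_X : 1 ≤ X := by
    have hkℓ : 1 ≤ k * log ℓ := one_le_mul_log hk hℓ
    have hℓk : 0 ≤ ℓ * #A * log k := mul_nonneg (by positivity) (log_nonneg (by linarith))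
    have hB_one : (1 : ℝ) ≤ #B := mod_cast hB.card_pos
    calc 1 ≤ k * log ℓ * #B := one_le_mul_of_one_le_of_one_le hkℓ hB_one
      _ ≤ k * log ℓ * #B + ℓ * #A * log k := le_add_of_nonneg_right hℓk
      _ = X := by ring
  obtain ⟨E, hEAB, hE_card, hE⟩ := exists_subset_product_forall_card_eq hA hB hk hℓ
    ((div_le_iff₀ (by linarith)).1 (Nat.le_ceil (#A / k)))
    ((div_le_iff₀ (by linarith)).1 (Nat.le_ceil (#B / ℓ)))
    (m := ⌊3 * X⌋₊ + 1) (mod_cast Nat.lt_floor_add_one (3 * X))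
  refine ⟨E, hEAB, ?_, fun S hSA hS T hTB hT ↦ ?_⟩
  · calc (#E : ℝ) ≤ ⌊3 * X⌋₊ + 1 := mod_cast hE_card
      _ ≤ 3 * X + X := add_le_add (Nat.floor_le (by linarith)) one_le_X
      _ = 4 * X := by ring
  · obtain ⟨S', hS'S, hS'_card⟩ := exists_subset_card_eq (Nat.ceil_le.2 hS)
    obtain ⟨T', hT'T, hT'_card⟩ := exists_subset_card_eq (Nat.ceil_le.2 hT)
    obtain ⟨x, hx, y, hy, hxy⟩ :=
      hE S' (hS'S.trans hSA) hS'_card T' (hT'T.trans hTB) hT'_card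
    exact ⟨x, hS'S hx, y, hT'T hy, hxy⟩

end Rectangles

section BipartiteGraphs

variable {α : Type*} {A B : Finset α}

theorem exists_isBipartiteWith_ncard_edgeSet_le {E : Finset (α × α)} (hAB : Disjoint A B)
    (hE : E ⊆ A ×ˢ B) :
    ∃ H : SimpleGraph α, H.IsBipartiteWith A B ∧ H.edgeSet.ncard ≤ #E ∧
      ∀ x y, (x, y) ∈ E → H.Adj x y := by
  classical
  let edges : Finset (Sym2 α) := E.image fun e ↦ s(e.1, e.2)
  have mem_of_mem {x y : α} (hxy : (x, y) ∈ E) : x ∈ A ∧ y ∈ B := mem_product.1 (hE hxy)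
  have mem_edges {x y : α} : s(x, y) ∈ edges ↔ (x, y) ∈ E ∨ (y, x) ∈ E := by
    simp only [edges, mem_image, Prod.exists, Sym2.eq_iff]
    grind
  refine ⟨.fromEdgeSet edges, ⟨disjoint_coe.2 hAB, fun x y hxy ↦ ?_⟩, ?_, fun x y hxy ↦ ?_⟩
  · exact (mem_edges.1 hxy.1).imp mem_of_mem fun h ↦ (mem_of_mem h).symm
  · rw [SimpleGraph.edgeSet_fromEdgeSet]
    calc ((edges : Set (Sym2 α)) \ Sym2.diagSet).ncard ≤ (edges : Set (Sym2 α)).ncard :=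
          Set.ncard_le_ncard Set.sdiff_subset edges.finite_toSet
      _ = #edges := Set.ncard_coe_finset edges
      _ ≤ #E := card_image_le
  · obtain ⟨hx, hy⟩ := mem_of_mem hxy
    exact ⟨mem_edges.2 (.inl hxy), hAB.forall_ne_finset hx hy⟩

theorem card_sub_le_ncard_neighbors {H : SimpleGraph α} {T : Finset α} {r : ℝ}
    (hH : H.IsBipartiteWith A B) (hTB : T ⊆ B)
    (h : ∀ S ⊆ A, r ≤ #S → ∃ y ∈ S, ∃ x ∈ T, H.Adj x y) :
    #A - r ≤ {y | ∃ x ∈ T, H.Adj x y}.ncard := by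
  classical
  have neighbors_eq : {y | ∃ x ∈ T, H.Adj x y} = ({y ∈ A | ∃ x ∈ T, H.Adj x y} : Finset α) := by
    ext y
    simpa using fun x hx hxy ↦ hH.symm.mem_of_mem_adj (hTB hx) hxy
  have missed_lt : (#{y ∈ A | ¬∃ x ∈ T, H.Adj x y} : ℝ) < r := by
    refine lt_of_not_ge fun hr ↦ ?_
    obtain ⟨y, hy, hyT⟩ := h _ (filter_subset _ A) hr
    exact (mem_filter.1 hy).2 hyT
  have hcard : (#{y ∈ A | ∃ x ∈ T, H.Adj x y} + #{y ∈ A | ¬∃ x ∈ T, H.Adj x y} : ℝ) = #A :=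
    mod_cast card_filter_add_card_filter_not _
  rw [neighbors_eq, Set.ncard_coe_finset]
  linarith

end BipartiteGraphs

theorem expander_exists_general {α : Type*} {A B : Finset α} {k ℓ : ℝ} (hAB : Disjoint A B)
    (hA : A.Nonempty) (hB : B.Nonempty) (hk : 2 ≤ k) (hℓ : 2 ≤ ℓ) :
    ∃ H : SimpleGraph α, H.IsBipartiteWith A B ∧
      (H.edgeSet.ncard : ℝ) ≤ 4 * (k * #B * log ℓ + ℓ * #A * log k) ∧
      ∀ T ⊆ B, #B / ℓ ≤ #T → (1 - 1 / k) * #A ≤ {y | ∃ x ∈ T, H.Adj x y}.ncard := by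
  obtain ⟨E, hEAB, hE_card, hE⟩ := exists_subset_product_forall_div_le_card hA hB hk hℓ
  obtain ⟨H, hH, hH_card, hEH⟩ := exists_isBipartiteWith_ncard_edgeSet_le hAB hEAB
  refine ⟨H, hH, le_trans (mod_cast hH_card) hE_card, fun T hTB hT ↦ ?_⟩
  calc (1 - 1 / k) * #A = #A - #A / k := by ring
    _ ≤ {y | ∃ x ∈ T, H.Adj x y}.ncard := card_sub_le_ncard_neighbors hH hTB fun S hSA hS ↦ by
      obtain ⟨y, hy, x, hx, hyx⟩ := hE S hSA hS T hTB hT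
      exact ⟨y, hy, x, hx, (hEH y x hyx).symm⟩

/-- There is an absolute constant `C > 0` such that for all `k, ℓ ≥ 2` and every `n ≥ 1`
and disjoint finite sets `A`, `B` of size `n` each, there is a bipartite graph `H`
between `A` and `B` with at most `C·n·(k·log ℓ + ℓ·log k)` edges such that every
`B' ⊆ B` of size at least `n/ℓ` has neighbourhood of size at least `(1 - 1/k)·n`. -/
theorem expander_exists :
    ∃ C : ℝ, 0 < C ∧
      ∀ k ℓ : ℝ, 2 ≤ k → 2 ≤ ℓ → ∀ n : ℕ, 1 ≤ n →
      ∀ (α : Type) (A B : Finset α), Disjoint A B → A.card = n → B.card = n →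
      ∃ H : SimpleGraph α,
        (∀ x y, H.Adj x y → (x ∈ A ∧ y ∈ B) ∨ (x ∈ B ∧ y ∈ A)) ∧
        (H.edgeSet.ncard : ℝ) ≤ C * n * (k * Real.log ℓ + ℓ * Real.log k) ∧
        ∀ B' : Finset α, B' ⊆ B → (n : ℝ) / ℓ ≤ B'.card →
          (1 - 1 / k) * n ≤ ({y | ∃ x ∈ B', H.Adj x y}.ncard : ℝ) := by
  refine ⟨4, zero_lt_four, fun k ℓ hk hℓ n hn α A B hAB hA hB ↦ ?_⟩
  obtain ⟨H, hH, hH_card, hH_expand⟩ :=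
    expander_exists_general hAB (card_pos.1 (by lia)) (card_pos.1 (by lia)) hk hℓ
  rw [hA, hB] at hH_card
  rw [hA, hB] at hH_expand
  exact ⟨H, fun x y hxy ↦ hH.mem_of_adj hxy, hH_card.trans_eq (by ring), hH_expand⟩
end

section
/- For every integer d ≥ 1 there exists a constant C > 0 such that for every real s ≥ 1 and every finite point set P ⊂ ℝ^d with |P| = n ≥ 2, there exist an integer m ≤ C · s^d · n and pairs (A_1, B_1), …, (A_m, B_m) of nonempty subsets of P such that: (i) for every i ∈ {1, …, m}, dist(A_i, B_i) ≥ s · max(diam(A_i), diam(B_i)); and (ii) for every pair of distinct points p, q ∈ P there exists exactly one index i ∈ {1, …, m} such that (p ∈ A_i and q ∈ B_i) or (q ∈ A_i and p ∈ B_i). -/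
/-!
Quadtree proof with uncompressed levels. Enclose `P` in a cube and subdivide dyadically; to two
distinct points attach the pair of cells containing them at the first level where these cells are
well separated. Every point pair covered by such a cell pair has the same first level, so it is
covered by no other one.

At the parent level the two cells are not well separated, which leaves only `O(s ^ d)` choices for
the second cell once the first is known. Moreover at least one of the two cells is smaller than its
parent, hence has a sibling: if both agreed with their parents, the parents would be separated too.
Finally, over all levels together there are at most `2 * #P` cells with a sibling, since `m ≥ 2`
children of one parent raise the number of cells by `m - 1 ≥ m / 2` and the number of cells never
exceeds `#P`.
-/

open Finset Filter

/-! ### Pair decompositions -/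

section PairDecomposition

variable {α : Type*}

/-- An unordered pair of sets covers `(p, q)` if one of its two sets contains `p` and the other
contains `q`. -/
def Covers (w : Sym2 (Finset α)) (p q : α) : Prop :=
  ∃ A B, w = s(A, B) ∧ p ∈ A ∧ q ∈ B

lemma covers_mk {A B : Finset α} {p q : α} :
    Covers s(A, B) p q ↔ (p ∈ A ∧ q ∈ B) ∨ (q ∈ A ∧ p ∈ B) := by
  constructor
  · rintro ⟨A', B', h, hp, hq⟩
    rcases Sym2.eq_iff.1 h with ⟨rfl, rfl⟩ | ⟨rfl, rfl⟩
    · exact .inl ⟨hp, hq⟩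
    · exact .inr ⟨hq, hp⟩
  · rintro (⟨hp, hq⟩ | ⟨hq, hp⟩)
    · exact ⟨A, B, rfl, hp, hq⟩
    · exact ⟨B, A, Sym2.eq_swap, hp, hq⟩

/-- A pair decomposition of `P` with respect to a separation relation `Sep`. For
`Sep = WellSeparated s` this is an `s`-WSPD; pairs are unordered, so that no orientation has to be
chosen while the decomposition is constructed. -/
structure IsPairDecomposition (Sep : Finset α → Finset α → Prop) (P : Finset α)
    (W : Finset (Sym2 (Finset α))) : Prop where
  subset : ∀ ⦃A B⦄, s(A, B) ∈ W → A ⊆ P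
  nonempty : ∀ ⦃A B⦄, s(A, B) ∈ W → A.Nonempty
  sep : ∀ ⦃A B⦄, s(A, B) ∈ W → Sep A B
  existsUnique : ∀ p ∈ P, ∀ q ∈ P, p ≠ q → ∃! w, w ∈ W ∧ Covers w p q

lemma IsPairDecomposition.exists_fin {Sep : Finset α → Finset α → Prop} {P : Finset α}
    {W : Finset (Sym2 (Finset α))} (hW : IsPairDecomposition Sep P W) :
    ∃ A B : Fin #W → Finset α,
      (∀ i, (A i).Nonempty ∧ (B i).Nonempty ∧ A i ⊆ P ∧ B i ⊆ P) ∧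
      (∀ i, Sep (A i) (B i)) ∧
      (∀ p ∈ P, ∀ q ∈ P, p ≠ q → ∃! i, (p ∈ A i ∧ q ∈ B i) ∨ (q ∈ A i ∧ p ∈ B i)) := by
  let e := W.equivFin.symm
  have exists_rep (i : Fin #W) : ∃ A B, (e i : Sym2 (Finset α)) = s(A, B) :=
    Sym2.ind (fun A B ↦ ⟨A, B, rfl⟩) (e i : Sym2 (Finset α))
  choose A B hAB using exists_rep
  have hmem (i : Fin #W) : s(A i, B i) ∈ W := hAB i ▸ (e i).2
  have hmem' (i : Fin #W) : s(B i, A i) ∈ W := Sym2.eq_swap ▸ hmem i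
  refine ⟨A, B, fun i ↦ ⟨hW.nonempty (hmem i), hW.nonempty (hmem' i), hW.subset (hmem i),
    hW.subset (hmem' i)⟩, fun i ↦ hW.sep (hmem i), fun p hp q hq hpq ↦ ?_⟩
  simp only [← covers_mk, ← hAB]
  obtain ⟨w, ⟨hw, hcov⟩, huniq⟩ := hW.existsUnique p hp q hq hpq
  refine ⟨e.symm ⟨w, hw⟩, by simpa only [Equiv.apply_symm_apply] using hcov, fun j hj ↦ ?_⟩
  exact e.injective <| Subtype.ext <| by
    simpa only [Equiv.apply_symm_apply] using huniq (e j) ⟨(e j).2, hj⟩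

end PairDecomposition

/-! ### Elements with a sibling -/

section Siblings

variable {β γ : Type*} [DecidableEq β] [DecidableEq γ]

/-- The elements of `Q` that share their parent, i.e. their value under `h`, with another element
of `Q`. -/
def withSibling (h : β → γ) (Q : Finset β) : Finset β :=
  {a ∈ Q | ∃ b ∈ Q, b ≠ a ∧ h b = h a}

lemma two_mul_card_image_withSibling_le (h : β → γ) (Q : Finset β) :
    2 * #((withSibling h Q).image h) ≤ #(withSibling h Q) := by
  refine mul_card_image_le_card _ 2 fun c hc ↦ ?_
  obtain ⟨a, ha, rfl⟩ := mem_image.1 hc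
  obtain ⟨haQ, b, hbQ, hba, hab⟩ := mem_filter.1 ha
  have hb : b ∈ withSibling h Q := mem_filter.2 ⟨hbQ, a, haQ, hba.symm, hab.symm⟩
  exact one_lt_card.2 ⟨b, mem_filter.2 ⟨hb, hab⟩, a, mem_filter.2 ⟨ha, rfl⟩, hba⟩

lemma card_withSibling_add_two_mul_card_image_le (h : β → γ) (Q : Finset β) :
    #(withSibling h Q) + 2 * #(Q.image h) ≤ 2 * #Q := by
  have hsub : withSibling h Q ⊆ Q := filter_subset _ _
  have himage : #(Q.image h) ≤ #((Q \ withSibling h Q).image h) + #((withSibling h Q).image h) := by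
    rw [← sdiff_union_of_subset hsub, image_union, sdiff_union_of_subset hsub]
    exact card_union_le _ _
  have halone : #((Q \ withSibling h Q).image h) ≤ #(Q \ withSibling h Q) := card_image_le
  have hsplit := card_sdiff_add_card_eq_card hsub
  have hsiblings := two_mul_card_image_withSibling_le h Q
  omega

end Siblings

/-! ### Pair decompositions from nested labellings -/

/-- An abstract quadtree: the points with a given label at level `k` form a cell, and the label at
level `k + 1` determines the one at level `k`. -/
structure NestedLabelling (α β : Type*) where
  /-- The label of a point at a given level. -/
  label : ℕ → α → β
  /-- The label of the enclosing cell one level up. -/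
  parent : β → β
  parent_label : ∀ k p, parent (label (k + 1) p) = label k p

namespace NestedLabelling

variable {α β : Type*}

lemma label_eq_of_le {H : NestedLabelling α β} {j k : ℕ} {p q : α} (hjk : j ≤ k)
    (h : H.label k p = H.label k q) : H.label j p = H.label j q :=
  antitone_nat_of_succ_le (f := fun i ↦ H.label i p = H.label i q)
    (fun i hi ↦ by rw [← H.parent_label i p, ← H.parent_label i q, hi]) hjk h

variable [DecidableEq β] (H : NestedLabelling α β) (P : Finset α)
  {Sep : Finset α → Finset α → Prop}

/-- The cell with label `b` at level `k`, as a subset of `P`. -/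
def cell (k : ℕ) (b : β) : Finset α := {x ∈ P | H.label k x = b}

/-- The cell around `p` at level `k`. -/
def cellOf (k : ℕ) (p : α) : Finset α := H.cell P k (H.label k p)

variable {H P}

lemma mem_cellOf {k : ℕ} {x p : α} : x ∈ H.cellOf P k p ↔ x ∈ P ∧ H.label k x = H.label k p :=
  mem_filter

lemma self_mem_cellOf {k : ℕ} {p : α} (hp : p ∈ P) : p ∈ H.cellOf P k p :=
  mem_cellOf.2 ⟨hp, rfl⟩

lemma cellOf_subset {k : ℕ} {p : α} : H.cellOf P k p ⊆ P :=
  filter_subset _ _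

lemma cellOf_eq_self {k : ℕ} {p : α} (h : ∀ x ∈ P, H.label k x = H.label k p) :
    H.cellOf P k p = P :=
  filter_true_of_mem h

lemma cellOf_eq_singleton {k : ℕ} {p : α} (h : Set.InjOn (H.label k) P) (hp : p ∈ P) :
    H.cellOf P k p = {p} :=
  eq_singleton_iff_unique_mem.2 ⟨self_mem_cellOf hp, fun _ hx ↦
    h (mem_coe.2 (mem_cellOf.1 hx).1) (mem_coe.2 hp) (mem_cellOf.1 hx).2⟩

lemma cellOf_congr {j k : ℕ} {x p : α} (hjk : j ≤ k) (hx : x ∈ H.cellOf P k p) :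
    H.cellOf P j x = H.cellOf P j p :=
  congrArg (H.cell P j) (label_eq_of_le hjk (mem_cellOf.1 hx).2)

variable (H P Sep) in
/-- The first level at which the cells of `p` and `q` are separated; `0` if there is none. -/
noncomputable def sepLevel (p q : α) : ℕ :=
  sInf {k | Sep (H.cellOf P k p) (H.cellOf P k q)}

variable (H P Sep) in
/-- The cells of `p` and `q` at their first separated level. -/
noncomputable def sepPair (p q : α) : Sym2 (Finset α) :=
  s(H.cellOf P (H.sepLevel P Sep p q) p, H.cellOf P (H.sepLevel P Sep p q) q)

lemma sep_sepLevel {k : ℕ} {p q : α} (h : Sep (H.cellOf P k p) (H.cellOf P k q)) :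
    Sep (H.cellOf P (H.sepLevel P Sep p q) p) (H.cellOf P (H.sepLevel P Sep p q) q) :=
  Nat.sInf_mem (s := {k | Sep (H.cellOf P k p) (H.cellOf P k q)}) ⟨k, h⟩

lemma sepLevel_le {k : ℕ} {p q : α} (h : Sep (H.cellOf P k p) (H.cellOf P k q)) :
    H.sepLevel P Sep p q ≤ k :=
  Nat.sInf_le h

lemma not_sep_of_lt_sepLevel {k : ℕ} {p q : α} (h : k < H.sepLevel P Sep p q) :
    ¬ Sep (H.cellOf P k p) (H.cellOf P k q) :=
  Nat.notMem_of_lt_sInf h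

lemma sepLevel_comm (hsymm : ∀ A B, Sep A B → Sep B A) (p q : α) :
    H.sepLevel P Sep p q = H.sepLevel P Sep q p :=
  congrArg sInf <| Set.ext fun _ ↦ ⟨hsymm _ _, hsymm _ _⟩

lemma sepPair_comm (hsymm : ∀ A B, Sep A B → Sep B A) (p q : α) :
    H.sepPair P Sep p q = H.sepPair P Sep q p := by
  rw [sepPair, sepPair, sepLevel_comm hsymm q p, Sym2.eq_swap]

lemma sepPair_congr {k : ℕ} {p q x y : α} (hk : Sep (H.cellOf P k p) (H.cellOf P k q))
    (hx : x ∈ H.cellOf P (H.sepLevel P Sep p q) p)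
    (hy : y ∈ H.cellOf P (H.sepLevel P Sep p q) q) :
    H.sepPair P Sep x y = H.sepPair P Sep p q := by
  have hsep : Sep (H.cellOf P (H.sepLevel P Sep p q) x) (H.cellOf P (H.sepLevel P Sep p q) y) := by
    rw [cellOf_congr le_rfl hx, cellOf_congr le_rfl hy]
    exact sep_sepLevel hk
  have hlevel : H.sepLevel P Sep x y = H.sepLevel P Sep p q := by
    refine (sepLevel_le hsep).antisymm (sepLevel_le ?_)
    rw [← cellOf_congr (sepLevel_le hsep) hx, ← cellOf_congr (sepLevel_le hsep) hy]
    exact sep_sepLevel hsep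
  rw [sepPair, sepPair, hlevel, cellOf_congr le_rfl hx, cellOf_congr le_rfl hy]

variable (H P) in
/-- The labels at level `k + 1` of the cells having a sibling. Their cells are the ones that are
smaller than their parents. -/
def branching (k : ℕ) : Finset β := withSibling H.parent (P.image (H.label (k + 1)))

lemma sum_card_branching_le (K : ℕ) : ∑ k ∈ range K, #(H.branching P k) ≤ 2 * #P := by
  suffices htelescope : ∑ k ∈ range K, #(H.branching P k) + 2 * #(P.image (H.label 0))
      ≤ 2 * #(P.image (H.label K)) by
    have := card_image_le (s := P) (f := H.label K)
    omega
  induction K with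
  | zero => simp
  | succ K ih =>
    have himage : (P.image (H.label (K + 1))).image H.parent = P.image (H.label K) := by
      rw [image_image]
      exact image_congr fun x _ ↦ H.parent_label K x
    have hlevel := card_withSibling_add_two_mul_card_image_le H.parent (P.image (H.label (K + 1)))
    rw [himage] at hlevel
    rw [sum_range_succ, branching]
    omega

lemma cellOf_succ_eq_of_notMem_branching {k : ℕ} {p : α} (hp : p ∈ P)
    (h : H.label (k + 1) p ∉ H.branching P k) : H.cellOf P (k + 1) p = H.cellOf P k p := by
  ext x
  simp only [mem_cellOf, and_congr_right_iff]
  refine fun hx ↦ ⟨label_eq_of_le k.le_succ, fun hxp ↦ ?_⟩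
  by_contra hne
  refine h (mem_filter.2 ⟨mem_image_of_mem _ hp, H.label (k + 1) x, mem_image_of_mem _ hx, hne, ?_⟩)
  rw [H.parent_label, H.parent_label, hxp]

lemma label_mem_branching_or {k : ℕ} {p q : α} (hp : p ∈ P) (hq : q ∈ P)
    (hk : ¬ Sep (H.cellOf P k p) (H.cellOf P k q))
    (hk' : Sep (H.cellOf P (k + 1) p) (H.cellOf P (k + 1) q)) :
    H.label (k + 1) p ∈ H.branching P k ∨ H.label (k + 1) q ∈ H.branching P k := by
  by_contra! h
  rw [cellOf_succ_eq_of_notMem_branching hp h.1, cellOf_succ_eq_of_notMem_branching hq h.2] at hk'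
  exact hk hk'

section Candidates

variable [DecidableEq α]

variable (H P) in
/-- The pairs formed, at some level below `K`, by a cell with a sibling and one of the cells that
`nbrs` lists for it. -/
def candidates (nbrs : β → Finset β) (K : ℕ) : Finset (Sym2 (Finset α)) :=
  (range K).biUnion fun k ↦ (H.branching P k).biUnion fun a ↦
    (nbrs a).image fun b ↦ s(H.cell P (k + 1) a, H.cell P (k + 1) b)

lemma card_candidates_le {nbrs : β → Finset β} {N : ℕ} (hN : ∀ b, #(nbrs b) ≤ N) (K : ℕ) :
    #(H.candidates P nbrs K) ≤ 2 * N * #P :=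
  calc #(H.candidates P nbrs K)
    _ ≤ ∑ k ∈ range K, #(H.branching P k) * N :=
      card_biUnion_le.trans <| sum_le_sum fun _ _ ↦
        card_biUnion_le_card_mul _ _ _ fun a _ ↦ card_image_le.trans (hN a)
    _ = (∑ k ∈ range K, #(H.branching P k)) * N := (sum_mul ..).symm
    _ ≤ 2 * #P * N := Nat.mul_le_mul_right N (sum_card_branching_le K)
    _ = 2 * N * #P := by ring

lemma mem_candidates_of_label_mem {nbrs : β → Finset β} {k K : ℕ} {p q : α} (hk : k < K)
    (hp : H.label (k + 1) p ∈ H.branching P k)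
    (hq : H.label (k + 1) q ∈ nbrs (H.label (k + 1) p)) :
    s(H.cellOf P (k + 1) p, H.cellOf P (k + 1) q) ∈ H.candidates P nbrs K :=
  mem_biUnion.2 ⟨k, mem_range.2 hk, mem_biUnion.2 ⟨_, hp, mem_image_of_mem _ hq⟩⟩

lemma sepPair_mem_candidates (hsymm : ∀ A B, Sep A B → Sep B A) {nbrs : β → Finset β}
    (hnbrs : ∀ k, ∀ p ∈ P, ∀ q ∈ P, ¬ Sep (H.cellOf P k p) (H.cellOf P k q) →
      H.label (k + 1) q ∈ nbrs (H.label (k + 1) p))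
    {K : ℕ} {p q : α} (hp : p ∈ P) (hq : q ∈ P)
    (hroot : ¬ Sep (H.cellOf P 0 p) (H.cellOf P 0 q))
    (hleaf : Sep (H.cellOf P K p) (H.cellOf P K q)) :
    H.sepPair P Sep p q ∈ H.candidates P nbrs K := by
  have hsep := sep_sepLevel hleaf
  have hne : H.sepLevel P Sep p q ≠ 0 := fun h ↦ hroot (h ▸ hsep)
  obtain ⟨k, hk⟩ := Nat.exists_eq_succ_of_ne_zero hne
  have hkK : k < K := Nat.lt_of_succ_le (hk ▸ sepLevel_le hleaf)
  have hnot : ¬ Sep (H.cellOf P k p) (H.cellOf P k q) := not_sep_of_lt_sepLevel (by omega)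
  rw [hk] at hsep
  rw [sepPair, hk]
  rcases label_mem_branching_or hp hq hnot hsep with hbranch | hbranch
  · exact mem_candidates_of_label_mem hkK hbranch (hnbrs k p hp q hq hnot)
  · rw [Sym2.eq_swap]
    exact mem_candidates_of_label_mem hkK hbranch (hnbrs k q hq p hp fun h ↦ hnot (hsymm _ _ h))

lemma isPairDecomposition_image_sepPair (hsymm : ∀ A B, Sep A B → Sep B A)
    (hsep : ∀ p ∈ P, ∀ q ∈ P, p ≠ q → ∃ k, Sep (H.cellOf P k p) (H.cellOf P k q)) :
    IsPairDecomposition Sep P (P.offDiag.image fun z ↦ H.sepPair P Sep z.1 z.2) := by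
  have exists_rep {A B : Finset α} (h : s(A, B) ∈ P.offDiag.image fun z ↦ H.sepPair P Sep z.1 z.2) :
      ∃ p ∈ P, ∃ q ∈ P, p ≠ q ∧ A = H.cellOf P (H.sepLevel P Sep p q) p ∧
        B = H.cellOf P (H.sepLevel P Sep p q) q := by
    obtain ⟨⟨p, q⟩, hpq, hAB⟩ := mem_image.1 h
    obtain ⟨hp, hq, hne⟩ := mem_offDiag.1 hpq
    rcases Sym2.eq_iff.1 hAB with ⟨rfl, rfl⟩ | ⟨rfl, rfl⟩
    · exact ⟨p, hp, q, hq, hne, rfl, rfl⟩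
    · exact ⟨q, hq, p, hp, hne.symm, by rw [sepLevel_comm hsymm], by rw [sepLevel_comm hsymm]⟩
  refine ⟨fun A B h ↦ ?_, fun A B h ↦ ?_, fun A B h ↦ ?_, fun p hp q hq hpq ↦ ?_⟩
  · obtain ⟨p, -, q, -, -, rfl, -⟩ := exists_rep h
    exact cellOf_subset
  · obtain ⟨p, hp, q, -, -, rfl, -⟩ := exists_rep h
    exact ⟨p, self_mem_cellOf hp⟩
  · obtain ⟨p, hp, q, hq, hne, rfl, rfl⟩ := exists_rep h
    exact sep_sepLevel (hsep p hp q hq hne).choose_spec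
  · refine ⟨H.sepPair P Sep p q, ⟨mem_image.2 ⟨(p, q), mem_offDiag.2 ⟨hp, hq, hpq⟩, rfl⟩,
      _, _, rfl, self_mem_cellOf hp, self_mem_cellOf hq⟩, ?_⟩
    rintro _ ⟨hw, A, B, rfl, hpA, hqB⟩
    obtain ⟨p', hp', q', hq', hne, rfl, rfl⟩ := exists_rep hw
    exact (sepPair_congr (hsep p' hp' q' hq' hne).choose_spec hpA hqB).symm

end Candidates

theorem exists_isPairDecomposition (H : NestedLabelling α β) (hsymm : ∀ A B, Sep A B → Sep B A)
    (hroot : ∀ p ∈ P, ∀ q ∈ P, p ≠ q → ¬ Sep (H.cellOf P 0 p) (H.cellOf P 0 q))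
    {K : ℕ} (hleaf : ∀ p ∈ P, ∀ q ∈ P, p ≠ q → Sep (H.cellOf P K p) (H.cellOf P K q))
    {nbrs : β → Finset β} {N : ℕ} (hN : ∀ b, #(nbrs b) ≤ N)
    (hnbrs : ∀ k, ∀ p ∈ P, ∀ q ∈ P, ¬ Sep (H.cellOf P k p) (H.cellOf P k q) →
      H.label (k + 1) q ∈ nbrs (H.label (k + 1) p)) :
    ∃ W, IsPairDecomposition Sep P W ∧ #W ≤ 2 * N * #P := by
  classical
  refine ⟨_, isPairDecomposition_image_sepPair (H := H) hsymm
    fun p hp q hq hpq ↦ ⟨K, hleaf p hp q hq hpq⟩, ?_⟩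
  refine (card_le_card (image_subset_iff.2 fun z hz ↦ ?_)).trans (card_candidates_le (H := H) hN K)
  obtain ⟨hp, hq, hpq⟩ := mem_offDiag.1 hz
  exact sepPair_mem_candidates hsymm hnbrs hp hq (hroot _ hp _ hq hpq) (hleaf _ hp _ hq hpq)

end NestedLabelling

/-! ### Well-separated sets -/

section WellSeparated

variable {X : Type*} [PseudoMetricSpace X]

/-- `A` and `B` are `s`-well-separated: their distance is at least `s` times either diameter. The
distance of the two sets is expressed through its members, so an empty set is separated from every
set. -/
def WellSeparated (s : ℝ) (A B : Finset X) : Prop :=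
  ∀ a ∈ A, ∀ b ∈ B, s * max (Metric.diam (A : Set X)) (Metric.diam (B : Set X)) ≤ dist a b

lemma WellSeparated.symm {s : ℝ} {A B : Finset X} (h : WellSeparated s A B) :
    WellSeparated s B A := fun b hb a ha ↦ by
  rw [max_comm, dist_comm]
  exact h a ha b hb

lemma wellSeparated_singleton (s : ℝ) (p q : X) : WellSeparated s {p} {q} := by
  simp [WellSeparated]

lemma not_wellSeparated_self {Y : Type*} [MetricSpace Y] {s : ℝ} (hs : 0 < s) {P : Finset Y}
    (hP : P.Nontrivial) : ¬ WellSeparated s P P := by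
  intro h
  obtain ⟨p, hp⟩ := hP.nonempty
  have hdiam : 0 < Metric.diam (P : Set Y) := Metric.diam_pos hP P.finite_toSet.isBounded
  have hle := h p hp p hp
  rw [max_self, dist_self] at hle
  exact hle.not_gt (mul_pos hs hdiam)

end WellSeparated

/-! ### The dyadic grid -/

lemma abs_floor_sub_floor_lt {R : Type*} [CommRing R] [LinearOrder R] [IsStrictOrderedRing R]
    [FloorRing R] (a b : R) : |((⌊a⌋ - ⌊b⌋ : ℤ) : R)| < |a - b| + 1 := by
  push_cast
  rw [abs_lt]
  constructor <;>
    linarith [Int.floor_le a, Int.lt_floor_add_one a, Int.floor_le b, Int.lt_floor_add_one b,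
      le_abs_self (a - b), neg_le_abs (a - b)]

lemma dist_le_sqrt_card_mul {ι : Type*} [Fintype ι] {p q : EuclideanSpace ℝ ι} {c : ℝ}
    (hc : 0 ≤ c) (h : ∀ i, |p i - q i| ≤ c) : dist p q ≤ √(Fintype.card ι) * c := by
  rw [EuclideanSpace.dist_eq, ← Real.sqrt_sq hc, ← Real.sqrt_mul (Nat.cast_nonneg _)]
  refine Real.sqrt_le_sqrt ?_
  calc ∑ i, dist (p i) (q i) ^ 2
    _ ≤ ∑ _i : ι, c ^ 2 := sum_le_sum fun i _ ↦ pow_le_pow_left₀ dist_nonneg (h i) 2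
    _ = Fintype.card ι * c ^ 2 := by simp

section Euclidean

/-- The dyadic grid whose level-`0` cell around the origin is the cube `[-w / 2, w / 2) ^ ι`; cells
at level `k` have side `w / 2 ^ k`. -/
noncomputable def dyadicGrid (ι : Type*) (w : ℝ) :
    NestedLabelling (EuclideanSpace ℝ ι) (ι → ℤ) where
  label k p i := ⌊2 ^ k * (p i / w + 1 / 2)⌋
  parent a i := a i / 2
  parent_label k p := by
    funext i
    have hfloor := Int.floor_div_natCast (2 ^ (k + 1) * (p i / w + 1 / 2) : ℝ) 2
    rw [Nat.cast_ofNat, Nat.cast_ofNat] at hfloor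
    rw [← hfloor]
    congr 1
    ring

namespace dyadicGrid

variable {ι : Type*} {w s : ℝ} {k : ℕ} {p q : EuclideanSpace ℝ ι}
  {P : Finset (EuclideanSpace ℝ ι)}

lemma scaled_sub_scaled (w : ℝ) (k : ℕ) (x y : ℝ) :
    2 ^ k * (x / w + 1 / 2) - 2 ^ k * (y / w + 1 / 2) = (x - y) / (w / 2 ^ k) := by
  rw [div_div_eq_mul_div]
  ring

lemma abs_sub_lt_of_label_eq (hw : 0 < w)
    (h : (dyadicGrid ι w).label k p = (dyadicGrid ι w).label k q) (i : ι) :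
    |p i - q i| < w / 2 ^ k := by
  have hside : 0 < w / 2 ^ k := by positivity
  have hlt := Int.abs_sub_lt_one_of_floor_eq_floor (congrFun h i)
  rwa [scaled_sub_scaled, abs_div, abs_of_pos hside, div_lt_one hside] at hlt

lemma abs_label_sub_lt (hw : 0 < w) {c : ℝ} {i : ι} (h : |p i - q i| ≤ c * (w / 2 ^ k)) :
    |(((dyadicGrid ι w).label k p i - (dyadicGrid ι w).label k q i : ℤ) : ℝ)| < c + 1 := by
  have hside : 0 < w / 2 ^ k := by positivity
  refine (abs_floor_sub_floor_lt _ _).trans_le ?_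
  rw [scaled_sub_scaled, abs_div, abs_of_pos hside]
  gcongr
  exact (div_le_iff₀ hside).2 h

lemma eventually_injOn_label (hw : 0 < w) (P : Finset (EuclideanSpace ℝ ι)) :
    ∀ᶠ k in atTop, Set.InjOn ((dyadicGrid ι w).label k) P := by
  have hside : Tendsto (fun k : ℕ ↦ w / 2 ^ k) atTop (nhds 0) :=
    tendsto_const_nhds.div_atTop (tendsto_pow_atTop_atTop_of_one_lt one_lt_two)
  have hsplit (p q : EuclideanSpace ℝ ι) (hpq : p ≠ q) :
      ∀ᶠ k in atTop, (dyadicGrid ι w).label k p ≠ (dyadicGrid ι w).label k q := by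
    obtain ⟨i, hi⟩ : ∃ i, p i ≠ q i := by
      by_contra! h
      exact hpq (PiLp.ext h)
    filter_upwards [hside.eventually_lt_const (abs_pos.2 (sub_ne_zero.2 hi))] with k hk heq
    exact (abs_sub_lt_of_label_eq hw heq i).not_gt hk
  have hall : ∀ᶠ k in atTop, ∀ z ∈ P ×ˢ P, z.1 ≠ z.2 →
      (dyadicGrid ι w).label k z.1 ≠ (dyadicGrid ι w).label k z.2 :=
    (eventually_all_finset _).2 fun z _ ↦ eventually_imp_distrib_left.2 (hsplit z.1 z.2)
  filter_upwards [hall] with k hk p hp q hq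
  exact not_imp_not.1 (hk (p, q) (mem_product.2 ⟨hp, hq⟩))

variable [Fintype ι]

lemma label_zero_eq_zero (hp : ‖p‖ < w / 2) : (dyadicGrid ι w).label 0 p = 0 := by
  funext i
  have hpi : |p i| < w / 2 := (PiLp.norm_apply_le p i).trans_lt hp
  have hw : 0 < w := by linarith [abs_nonneg (p i)]
  obtain ⟨hlower, hupper⟩ := abs_lt.1 hpi
  refine Int.floor_eq_zero_iff.2 ⟨?_, ?_⟩ <;> field_simp <;> linarith

lemma dist_le_of_label_eq (hw : 0 < w)
    (h : (dyadicGrid ι w).label k p = (dyadicGrid ι w).label k q) :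
    dist p q ≤ √(Fintype.card ι) * (w / 2 ^ k) :=
  dist_le_sqrt_card_mul (by positivity) fun i ↦ (abs_sub_lt_of_label_eq hw h i).le

lemma diam_cellOf_le (hw : 0 < w) (P : Finset (EuclideanSpace ℝ ι)) (k : ℕ)
    (p : EuclideanSpace ℝ ι) :
    Metric.diam ((dyadicGrid ι w).cellOf P k p : Set (EuclideanSpace ℝ ι))
      ≤ √(Fintype.card ι) * (w / 2 ^ k) :=
  Metric.diam_le_of_forall_dist_le (by positivity) fun _ hx _ hy ↦ dist_le_of_label_eq hw
    ((NestedLabelling.mem_cellOf.1 hx).2.trans (NestedLabelling.mem_cellOf.1 hy).2.symm)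

lemma abs_sub_le_of_not_wellSeparated (hw : 0 < w) (hs : 0 ≤ s)
    (h : ¬ WellSeparated s ((dyadicGrid ι w).cellOf P k p) ((dyadicGrid ι w).cellOf P k q))
    (i : ι) : |p i - q i| ≤ (s * √(Fintype.card ι) + 2) * (w / 2 ^ k) := by
  simp only [WellSeparated, not_forall, not_le] at h
  obtain ⟨a, ha, b, hb, hab⟩ := h
  have hpa : |p i - a i| < w / 2 ^ k :=
    abs_sub_lt_of_label_eq hw (NestedLabelling.mem_cellOf.1 ha).2.symm i
  have hbq : |b i - q i| < w / 2 ^ k :=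
    abs_sub_lt_of_label_eq hw (NestedLabelling.mem_cellOf.1 hb).2 i
  have hab' : |a i - b i| ≤ s * (√(Fintype.card ι) * (w / 2 ^ k)) :=
    calc |a i - b i|
      _ ≤ dist a b := by simpa [dist_eq_norm] using PiLp.norm_apply_le (a - b) i
      _ ≤ s * max (Metric.diam _) (Metric.diam _) := hab.le
      _ ≤ s * (√(Fintype.card ι) * (w / 2 ^ k)) :=
        mul_le_mul_of_nonneg_left (max_le (diam_cellOf_le hw P k p) (diam_cellOf_le hw P k q)) hs
  calc |p i - q i|
    _ ≤ |p i - a i| + |a i - b i| + |b i - q i| :=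
      (abs_sub_le _ _ _).trans (add_le_add_left (abs_sub_le _ _ _) _)
    _ ≤ (s * √(Fintype.card ι) + 2) * (w / 2 ^ k) := by linarith

lemma label_succ_mem_Icc (hw : 0 < w) (hs : 0 ≤ s) [DecidableEq ι]
    (h : ¬ WellSeparated s ((dyadicGrid ι w).cellOf P k p) ((dyadicGrid ι w).cellOf P k q)) :
    (dyadicGrid ι w).label (k + 1) q ∈
      Icc ((dyadicGrid ι w).label (k + 1) p - (⌊2 * s * √(Fintype.card ι) + 5⌋₊ : ι → ℤ))
        ((dyadicGrid ι w).label (k + 1) p + (⌊2 * s * √(Fintype.card ι) + 5⌋₊ : ι → ℤ)) := by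
  set R := ⌊2 * s * √(Fintype.card ι) + 5⌋₊
  have hR (i : ι) :
      |(dyadicGrid ι w).label (k + 1) p i - (dyadicGrid ι w).label (k + 1) q i| ≤ R := by
    -- At level `k + 1` the side is halved, which doubles `s * √d + 2`; rounding to labels adds `1`.
    have hside : |p i - q i| ≤ (2 * s * √(Fintype.card ι) + 4) * (w / 2 ^ (k + 1)) :=
      (abs_sub_le_of_not_wellSeparated hw hs h i).trans_eq (by rw [pow_succ]; field_simp; ring)
    rw [Int.abs_eq_natAbs, Int.ofNat_le]
    refine Nat.le_floor ?_
    rw [Nat.cast_natAbs, Int.cast_abs]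
    linarith [abs_label_sub_lt hw hside]
  exact mem_Icc.2 ⟨fun i ↦ sub_le_comm.1 (abs_sub_le_iff.1 (hR i)).1,
    fun i ↦ sub_le_iff_le_add'.1 (abs_sub_le_iff.1 (hR i)).2⟩

end dyadicGrid

variable {ι : Type*} [Fintype ι]

lemma card_Icc_sub_natCast_add_natCast [DecidableEq ι] (a : ι → ℤ) (R : ℕ) :
    #(Icc (a - (R : ι → ℤ)) (a + (R : ι → ℤ))) = (2 * R + 1) ^ Fintype.card ι := by
  rw [Pi.card_Icc, ← card_univ, ← prod_const]
  refine prod_congr rfl fun i _ ↦ ?_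
  rw [Int.card_Icc, Pi.add_apply, Pi.sub_apply, Pi.natCast_apply]
  omega

theorem exists_isPairDecomposition_wellSeparated {s : ℝ} (hs : 0 < s)
    (P : Finset (EuclideanSpace ℝ ι)) :
    ∃ W, IsPairDecomposition (WellSeparated s) P W ∧
      #W ≤ 2 * (2 * ⌊2 * s * √(Fintype.card ι) + 5⌋₊ + 1) ^ Fintype.card ι * #P := by
  classical
  obtain ⟨r, hr, hP⟩ := P.finite_toSet.isBounded.exists_pos_norm_lt
  have hw : 0 < 2 * r := by positivity
  obtain ⟨K, hK⟩ := (dyadicGrid.eventually_injOn_label hw P).exists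
  have hroot : ∀ p ∈ P, (dyadicGrid ι (2 * r)).label 0 p = 0 := fun p hp ↦
    dyadicGrid.label_zero_eq_zero ((hP p hp).trans_eq (by ring))
  refine (dyadicGrid ι (2 * r)).exists_isPairDecomposition (K := K) (fun _ _ ↦ .symm)
    (fun p hp q hq hpq ↦ ?_) (fun p hp q hq _ ↦ ?_)
    (fun a ↦ (card_Icc_sub_natCast_add_natCast a _).le)
    fun k p _ q _ ↦ dyadicGrid.label_succ_mem_Icc hw hs.le
  · rw [NestedLabelling.cellOf_eq_self fun x hx ↦ (hroot x hx).trans (hroot p hp).symm,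
      NestedLabelling.cellOf_eq_self fun x hx ↦ (hroot x hx).trans (hroot q hq).symm]
    exact not_wellSeparated_self hs ⟨p, hp, q, hq, hpq⟩
  · rw [NestedLabelling.cellOf_eq_singleton hK hp, NestedLabelling.cellOf_eq_singleton hK hq]
    exact wellSeparated_singleton s p q

end Euclidean

/-- Callahan–Kosaraju: for every `d ≥ 1` there is a constant `C > 0` such that every
`n`-point set `P ⊆ ℝ^d` (`n ≥ 2`) admits an `s`-well-separated pair decomposition
with at most `C·s^d·n` pairs. -/
theorem wspd_exists :
    ∀ d : ℕ, 1 ≤ d → ∃ C : ℝ, 0 < C ∧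
      ∀ s : ℝ, 1 ≤ s →
      ∀ P : Finset (EuclideanSpace ℝ (Fin d)), 2 ≤ P.card →
      ∃ (m : ℕ) (A B : Fin m → Finset (EuclideanSpace ℝ (Fin d))),
        (m : ℝ) ≤ C * s ^ d * P.card ∧
        (∀ i, (A i).Nonempty ∧ (B i).Nonempty ∧ A i ⊆ P ∧ B i ⊆ P) ∧
        (∀ i, ∀ a ∈ A i, ∀ b ∈ B i,
          s * max (Metric.diam (A i : Set (EuclideanSpace ℝ (Fin d))))
                  (Metric.diam (B i : Set (EuclideanSpace ℝ (Fin d)))) ≤ dist a b) ∧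
        (∀ p ∈ P, ∀ q ∈ P, p ≠ q →
          ∃! i, (p ∈ A i ∧ q ∈ B i) ∨ (q ∈ A i ∧ p ∈ B i)) := by
  intro d _
  refine ⟨2 * (4 * √d + 11) ^ d, by positivity, fun s hs P _ ↦ ?_⟩
  obtain ⟨W, hW, hcard⟩ := exists_isPairDecomposition_wellSeparated (zero_lt_one.trans_le hs) P
  obtain ⟨A, B, hmem, hsep, hcover⟩ := hW.exists_fin
  refine ⟨#W, A, B, ?_, hmem, hsep, hcover⟩
  rw [Fintype.card_fin] at hcard
  have hradius : (⌊2 * s * √d + 5⌋₊ : ℝ) ≤ 2 * s * √d + 5 := Nat.floor_le (by positivity)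
  calc (#W : ℝ)
    _ ≤ 2 * (2 * ⌊2 * s * √d + 5⌋₊ + 1) ^ d * #P := mod_cast hcard
    _ ≤ 2 * ((4 * √d + 11) * s) ^ d * #P := by
      gcongr
      linarith
    _ = 2 * (4 * √d + 11) ^ d * s ^ d * #P := by rw [mul_pow, ← mul_assoc]
end

section
/- Let T be a full binary tree and let ε be a real number with 0 < ε ≤ 1/2. For each node u of T define lbl(u) = ⌊log_{1+ε}(|T_u|)⌋, where |T_u| is the number of leaves of the subtree rooted at u, and call a node u special if u is a leaf or if lbl(u) differs from the labels of both children of u. Then for every node w of T, the subtree T_w contains a special node w' (a descendant of w, possibly w itself) with |T_{w'}| ≥ (1 − 2ε)·|T_w|. -/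
/-- A full binary tree: every non-leaf node has exactly two children. -/
inductive FullBinaryTree : Type
  | leaf : FullBinaryTree
  | node : FullBinaryTree → FullBinaryTree → FullBinaryTree

/-- The number of leaves of a full binary tree. -/
def FullBinaryTree.leaves : FullBinaryTree → ℕ
  | .leaf => 1
  | .node l r => l.leaves + r.leaves

/-- `u.IsSubtree t` means `u` is the subtree of `t` rooted at some node of `t`. -/
inductive FullBinaryTree.IsSubtree : FullBinaryTree → FullBinaryTree → Prop
  | refl (t : FullBinaryTree) : IsSubtree t t
  | left {u l r : FullBinaryTree} : IsSubtree u l → IsSubtree u (.node l r)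
  | right {u l r : FullBinaryTree} : IsSubtree u r → IsSubtree u (.node l r)

/-- The label of a node: `⌊log_{1+ε}(number of leaves below it)⌋`. -/
noncomputable def FullBinaryTree.lbl (ε : ℝ) (t : FullBinaryTree) : ℤ :=
  ⌊Real.log t.leaves / Real.log (1 + ε)⌋

/-- A node is special if it is a leaf or its label differs from the labels
of both of its children. -/
def FullBinaryTree.Special (ε : ℝ) : FullBinaryTree → Prop
  | .leaf => True
  | .node l r =>
      FullBinaryTree.lbl ε (.node l r) ≠ FullBinaryTree.lbl ε l ∧
      FullBinaryTree.lbl ε (.node l r) ≠ FullBinaryTree.lbl ε r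

/-! Starting at `w`, keep moving to a child with the same label. The descent stops at a special node
`w'` with the label of `w`. Since `log_{1+ε} |T_w|` and `log_{1+ε} |T_{w'}|` have the same integer
part, they differ by less than `1`, so `|T_w| < (1 + ε) |T_{w'}|`. As `(1 - ε) (1 + ε) ≤ 1`, this
gives `(1 - ε) |T_w| ≤ |T_{w'}|`. -/

theorem lt_mul_of_floor_logb_le {b x y : ℝ} (hb : 1 < b) (hx : 0 < x) (hy : 0 < y)
    (h : ⌊Real.logb b x⌋ ≤ ⌊Real.logb b y⌋) : x < b * y := by
  have hb_pos : 0 < b := one_pos.trans hb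
  rw [← Real.logb_lt_logb_iff hb hx (mul_pos hb_pos hy)]
  calc
    Real.logb b x < ⌊Real.logb b x⌋ + 1 := Int.lt_floor_add_one _
    _ ≤ ⌊Real.logb b y⌋ + 1 := by gcongr
    _ ≤ Real.logb b y + 1 := by gcongr; exact Int.floor_le _
    _ = Real.logb b (b * y) := by
      rw [Real.logb_mul hb_pos.ne' hy.ne', Real.logb_self_eq_one hb, add_comm]

theorem one_sub_mul_le_of_le_one_add_mul {R : Type*} [CommRing R] [LinearOrder R]
    [IsStrictOrderedRing R] {ε x y : R} (hε : 0 ≤ ε) (hx : 0 ≤ x) (h : x ≤ (1 + ε) * y) :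
    (1 - ε) * x ≤ y := by
  refine le_of_mul_le_mul_left ?_ (add_pos_of_pos_of_nonneg one_pos hε)
  calc
    (1 + ε) * ((1 - ε) * x) = x - ε ^ 2 * x := by ring
    _ ≤ x := sub_le_self x (by positivity)
    _ ≤ (1 + ε) * y := h

namespace FullBinaryTree

theorem leaves_pos (t : FullBinaryTree) : 0 < t.leaves := by
  induction t with
  | leaf => exact one_pos
  | node l r ihl _ => exact Nat.add_pos_left ihl _

theorem leaves_lt_of_lbl_le {ε : ℝ} (hε : 0 < ε) {s t : FullBinaryTree}
    (h : s.lbl ε ≤ t.lbl ε) : (s.leaves : ℝ) < (1 + ε) * t.leaves :=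
  lt_mul_of_floor_logb_le (lt_add_of_pos_right 1 hε) (Nat.cast_pos.mpr s.leaves_pos)
    (Nat.cast_pos.mpr t.leaves_pos) h

theorem exists_isSubtree_special_lbl_eq (ε : ℝ) (w : FullBinaryTree) :
    ∃ w' : FullBinaryTree, w'.IsSubtree w ∧ w'.Special ε ∧ w'.lbl ε = w.lbl ε := by
  induction w with
  | leaf => exact ⟨leaf, .refl _, trivial, rfl⟩
  | node l r ihl ihr =>
    by_cases hl : (node l r).lbl ε = l.lbl ε
    · obtain ⟨w', hsub, hspecial, hlbl⟩ := ihl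
      exact ⟨w', .left hsub, hspecial, hlbl.trans hl.symm⟩
    by_cases hr : (node l r).lbl ε = r.lbl ε
    · obtain ⟨w', hsub, hspecial, hlbl⟩ := ihr
      exact ⟨w', .right hsub, hspecial, hlbl.trans hr.symm⟩
    · exact ⟨node l r, .refl _, ⟨hl, hr⟩, rfl⟩

end FullBinaryTree

theorem exists_large_special_subtree_general {ε : ℝ} (hε : 0 < ε) (w : FullBinaryTree) :
    ∃ w' : FullBinaryTree, w'.IsSubtree w ∧ w'.Special ε ∧
      (w.leaves : ℝ) < (1 + ε) * w'.leaves := by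
  obtain ⟨w', hsub, hspecial, hlbl⟩ := w.exists_isSubtree_special_lbl_eq ε
  exact ⟨w', hsub, hspecial, FullBinaryTree.leaves_lt_of_lbl_le hε hlbl.ge⟩

/-- Every subtree `T_w` of a full binary tree contains a special node `w'` with
`|T_{w'}| ≥ (1 - 2ε)·|T_w|`. -/
theorem exists_large_special_subtree :
    ∀ ε : ℝ, 0 < ε → ε ≤ 1 / 2 →
    ∀ T w : FullBinaryTree, w.IsSubtree T →
    ∃ w' : FullBinaryTree, w'.IsSubtree w ∧ w'.Special ε ∧
      (1 - 2 * ε) * w.leaves ≤ (w'.leaves : ℝ) := by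
  intro ε hε _ _ w _
  obtain ⟨w', hsub, hspecial, hlt⟩ := exists_large_special_subtree_general hε w
  exact ⟨w', hsub, hspecial, le_trans (by gcongr; linarith)
    (one_sub_mul_le_of_le_one_add_mul hε.le w.leaves.cast_nonneg hlt.le)⟩
end

section
/- For every integer d ≥ 1 and every finite point set P ⊂ ℝ^d containing at least two distinct points, there exists a partition of P into two nonempty disjoint sets P_1 and P_2 with P_1 ∪ P_2 = P such that diam'(P_1) ≤ (1 − 1/(2d)) · diam'(P) and diam'(P_2) ≤ (1 − 1/(2d)) · diam'(P). -/
/-- `diam' P`: the sum of the side lengths of the minimum axis-aligned bounding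
box of the finite nonempty point set `P ⊆ ℝ^d`. -/
noncomputable def diam' {d : ℕ} (P : Finset (EuclideanSpace ℝ (Fin d)))
    (h : P.Nonempty) : ℝ :=
  ∑ i : Fin d, ((P.sup' h fun p => p i) - (P.inf' h fun p => p i))

/-!
Cut the bounding box of `P` in half across a longest side. This side has length at least
`diam' P / d`, and both parts lose at least half of it while no other side grows, so each part
loses at least `diam' P / (2d)`. One maximizer of the cut coordinate is always put into the upper
part, so that both parts are nonempty even when the coordinate is constant on `P`.
-/

variable {α ι R 𝕜 : Type*}

/-- The length of the range of `g` on the nonempty finite set `P`. When `g` is a coordinate, this is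
the length of the corresponding side of the bounding box of `P`. -/
def extent [Lattice R] [Sub R] (g : α → R) (P : Finset α) (h : P.Nonempty) : R :=
  P.sup' h g - P.inf' h g

/-- The sum of the side lengths of the bounding box of the points `f p`, `p ∈ P`. Points are
labelled by an arbitrary type `α`, and distinct labels may carry the same point. -/
def boxDiam [Fintype ι] [Lattice R] [AddCommGroup R] (f : α → ι → R) (P : Finset α)
    (h : P.Nonempty) : R :=
  ∑ i, extent (f · i) P h

lemma diam'_eq_boxDiam {d : ℕ} (P : Finset (EuclideanSpace ℝ (Fin d))) (h : P.Nonempty) :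
    diam' P h = boxDiam WithLp.ofLp P h :=
  rfl

section OrderedGroup

variable [AddCommGroup R]

lemma extent_mono [Lattice R] [IsOrderedAddMonoid R] (g : α → R) {P Q : Finset α} (hQP : Q ⊆ P)
    (hQ : Q.Nonempty) : extent g Q hQ ≤ extent g P (hQ.mono hQP) :=
  sub_le_sub (Finset.sup'_mono g hQP hQ) (Finset.inf'_mono g hQP hQ)

lemma extent_le_sub [Lattice R] [IsOrderedAddMonoid R] {g : α → R} {P : Finset α}
    (h : P.Nonempty) {a b : R} (hab : ∀ p ∈ P, g p ∈ Set.Icc a b) : extent g P h ≤ b - a :=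
  sub_le_sub (Finset.sup'_le h g fun p hp ↦ (hab p hp).2)
    (Finset.le_inf' h g fun p hp ↦ (hab p hp).1)

lemma extent_sub_extent_le_boxDiam_sub_boxDiam [Fintype ι] [Lattice R] [IsOrderedAddMonoid R]
    (f : α → ι → R) {P Q : Finset α} (hQP : Q ⊆ P) (hQ : Q.Nonempty) (i : ι) :
    extent (f · i) P (hQ.mono hQP) - extent (f · i) Q hQ ≤
      boxDiam f P (hQ.mono hQP) - boxDiam f Q hQ := by
  rw [boxDiam, boxDiam, ← Finset.sum_sub_distrib]
  exact Finset.single_le_sum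
    (f := fun j ↦ extent (f · j) P (hQ.mono hQP) - extent (f · j) Q hQ)
    (fun j _ ↦ sub_nonneg.2 (extent_mono (f · j) hQP hQ)) (Finset.mem_univ i)

lemma exists_boxDiam_le_card_nsmul_extent [Fintype ι] [Nonempty ι] [LinearOrder R]
    [IsOrderedAddMonoid R] (f : α → ι → R) (P : Finset α) (h : P.Nonempty) :
    ∃ i, boxDiam f P h ≤ Fintype.card ι • extent (f · i) P h := by
  obtain ⟨i, hi⟩ := Finite.exists_max fun j ↦ extent (f · j) P h
  exact ⟨i, Finset.sum_le_card_nsmul _ _ _ fun j _ ↦ hi j⟩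

end OrderedGroup

lemma exists_ne_forall_mem_Icc [LinearOrder R] (g : α → R) {P : Finset α} (hP : P.Nontrivial) :
    ∃ a ∈ P, ∃ b ∈ P, a ≠ b ∧ ∀ p ∈ P, g p ∈ Set.Icc (g a) (g b) := by
  classical
  obtain ⟨b, hb, hmax⟩ := P.exists_max_image g hP.nonempty
  obtain ⟨a, ha, hmin⟩ := (P.erase b).exists_min_image g hP.erase_nonempty
  obtain ⟨hab, haP⟩ := Finset.mem_erase.1 ha
  refine ⟨a, haP, b, hb, hab, fun p hp ↦ ⟨?_, hmax p hp⟩⟩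
  obtain rfl | hpb := eq_or_ne p b
  · exact hmax a haP
  · exact hmin p (Finset.mem_erase.2 ⟨hpb, hp⟩)

section OrderedField

variable [Field 𝕜] [LinearOrder 𝕜] [IsStrictOrderedRing 𝕜]

lemma exists_partition_extent_le_half (g : α → 𝕜) {P : Finset α} (hP : P.Nontrivial) :
    ∃ (P₁ P₂ : Finset α) (h₁ : P₁.Nonempty) (h₂ : P₂.Nonempty),
      Disjoint P₁ P₂ ∧ (↑P₁ ∪ ↑P₂ : Set α) = ↑P ∧
      extent g P₁ h₁ ≤ extent g P hP.nonempty / 2 ∧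
      extent g P₂ h₂ ≤ extent g P hP.nonempty / 2 := by
  classical
  obtain ⟨a, ha, b, hb, hab, hg⟩ := exists_ne_forall_mem_Icc g hP
  have hP_extent : g b - g a ≤ extent g P hP.nonempty :=
    sub_le_sub (Finset.le_sup' g hb) (Finset.inf'_le g ha)
  have hgab : g a ≤ g b := (hg a ha).2
  let lower : α → Prop := fun p ↦ g p ≤ (g a + g b) / 2 ∧ p ≠ b
  have h₁ : (P.filter lower).Nonempty := ⟨a, Finset.mem_filter.2 ⟨ha, by linarith, hab⟩⟩
  have h₂ : (P.filter (¬ lower ·)).Nonempty := ⟨b, Finset.mem_filter.2 ⟨hb, fun h ↦ h.2 rfl⟩⟩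
  have hlower : ∀ p ∈ P.filter lower, g p ∈ Set.Icc (g a) ((g a + g b) / 2) := fun p hp ↦
    have ⟨hpP, hpl⟩ := Finset.mem_filter.1 hp
    ⟨(hg p hpP).1, hpl.1⟩
  have hupper : ∀ p ∈ P.filter (¬ lower ·), g p ∈ Set.Icc ((g a + g b) / 2) (g b) := by
    intro p hp
    obtain ⟨hpP, hpl⟩ := Finset.mem_filter.1 hp
    refine ⟨?_, (hg p hpP).2⟩
    by_contra! hlt
    exact hpl ⟨hlt.le, by rintro rfl; linarith⟩
  refine ⟨_, _, h₁, h₂, Finset.disjoint_filter_filter_not _ _ _, ?_, ?_, ?_⟩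
  · rw [← Finset.coe_union, Finset.filter_union_filter_not_eq]
  · linarith [extent_le_sub h₁ hlower]
  · linarith [extent_le_sub h₂ hupper]

lemma boxDiam_le_of_extent_le_half [Fintype ι] (f : α → ι → 𝕜) {P Q : Finset α} (hQP : Q ⊆ P)
    (hQ : Q.Nonempty) {i : ι}
    (hi : boxDiam f P (hQ.mono hQP) ≤ Fintype.card ι • extent (f · i) P (hQ.mono hQP))
    (hhalf : extent (f · i) Q hQ ≤ extent (f · i) P (hQ.mono hQP) / 2) :
    boxDiam f Q hQ ≤ (1 - 1 / (2 * Fintype.card ι)) * boxDiam f P (hQ.mono hQP) := by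
  have hcard : (0 : 𝕜) < Fintype.card ι := Nat.cast_pos.2 (Fintype.card_pos_iff.2 ⟨i⟩)
  have haverage : boxDiam f P (hQ.mono hQP) / Fintype.card ι ≤ extent (f · i) P (hQ.mono hQP) := by
    rwa [div_le_iff₀' hcard, ← nsmul_eq_mul]
  calc boxDiam f Q hQ
      ≤ boxDiam f P (hQ.mono hQP) - extent (f · i) P (hQ.mono hQP) / 2 := by
        linarith [extent_sub_extent_le_boxDiam_sub_boxDiam f hQP hQ i]
    _ ≤ boxDiam f P (hQ.mono hQP) - boxDiam f P (hQ.mono hQP) / Fintype.card ι / 2 := by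
        gcongr
    _ = (1 - 1 / (2 * Fintype.card ι)) * boxDiam f P (hQ.mono hQP) := by
        field_simp

theorem fair_split_exists_general [Fintype ι] [Nonempty ι] (f : α → ι → 𝕜) {P : Finset α}
    (hP : P.Nontrivial) :
    ∃ (P₁ P₂ : Finset α) (h₁ : P₁.Nonempty) (h₂ : P₂.Nonempty),
      Disjoint P₁ P₂ ∧ (↑P₁ ∪ ↑P₂ : Set α) = ↑P ∧
      boxDiam f P₁ h₁ ≤ (1 - 1 / (2 * Fintype.card ι)) * boxDiam f P hP.nonempty ∧
      boxDiam f P₂ h₂ ≤ (1 - 1 / (2 * Fintype.card ι)) * boxDiam f P hP.nonempty := by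
  obtain ⟨i, hi⟩ := exists_boxDiam_le_card_nsmul_extent f P hP.nonempty
  obtain ⟨P₁, P₂, h₁, h₂, hdisj, hunion, hhalf₁, hhalf₂⟩ :=
    exists_partition_extent_le_half (f · i) hP
  have hsub₁ : P₁ ⊆ P := Finset.coe_subset.1 (hunion ▸ Set.subset_union_left)
  have hsub₂ : P₂ ⊆ P := Finset.coe_subset.1 (hunion ▸ Set.subset_union_right)
  exact ⟨P₁, P₂, h₁, h₂, hdisj, hunion, boxDiam_le_of_extent_le_half f hsub₁ h₁ hi hhalf₁,
    boxDiam_le_of_extent_le_half f hsub₂ h₂ hi hhalf₂⟩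

end OrderedField

/-- Fair split: every finite set `P ⊆ ℝ^d` with at least two points can be partitioned
into nonempty parts `P₁, P₂` with `diam'(Pⱼ) ≤ (1 - 1/(2d))·diam'(P)` for `j = 1, 2`. -/
theorem fair_split_exists :
    ∀ d : ℕ, 1 ≤ d →
    ∀ (P : Finset (EuclideanSpace ℝ (Fin d))) (h : P.Nonempty), 2 ≤ P.card →
    ∃ (P₁ P₂ : Finset (EuclideanSpace ℝ (Fin d)))
      (h₁ : P₁.Nonempty) (h₂ : P₂.Nonempty),
      Disjoint P₁ P₂ ∧ (↑P₁ ∪ ↑P₂ : Set (EuclideanSpace ℝ (Fin d))) = ↑P ∧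
      diam' P₁ h₁ ≤ (1 - 1 / (2 * d)) * diam' P h ∧
      diam' P₂ h₂ ≤ (1 - 1 / (2 * d)) * diam' P h := by
  intro d hd P h hP
  have : Nonempty (Fin d) := ⟨⟨0, hd⟩⟩
  simpa only [diam'_eq_boxDiam, Fintype.card_fin] using
    fair_split_exists_general WithLp.ofLp (Finset.one_lt_card_iff_nontrivial.1 hP)
end
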